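/- arXiv:2108.03249 — 2 statements merged into one kernel-verified Lean document; each statement's English description precedes it below -/
import Mathlib

section
/- There exists an absolute constant C > 0 with the following property (the paper's Lemma 1). For every ε ∈ (0, 1/100], δ ∈ (0, 1), and η ∈ ℝ with |η| ≤ 1 − δ, set k = (√2/δ)·√(log(1/(2πε²))). Then there exists a real polynomial p of degree at most C · (√(1−|η|)/δ) · (1 + log(√(1−|η|)/δ)) · (1 + log(1/ε))^{3/2} such that |p(x)| ≤ 1 for all x ∈ [−1,1] and |p(x) − erf(k(x − η))| ≤ ε for all x ∈ [−1,1]. -/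
/-- The real error function `erf(x) = (2/√π) ∫₀ˣ e^{-t²} dt`. -/
noncomputable def erf (x : ℝ) : ℝ :=
  2 / Real.sqrt Real.pi * ∫ t in (0:ℝ)..x, Real.exp (-t ^ 2)


lemma four_coeff_bound (g : ℂ → ℂ) (hg : Differentiable ℂ g) (r M : ℝ) (hr : 0 < r)
    (hM : ∀ w : ℂ, ‖w‖ = r → ‖g ((w + w⁻¹) / 2)‖ ≤ M) (n : ℤ) :
    ‖∮ z in C(0, 1), z ^ (-n - 1) * g ((z + z⁻¹) / 2)‖ ≤ 2 * Real.pi * (M * r ^ (-n)) := by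
  have key : (∮ z in C(0, 1), z ^ (-n - 1) * g ((z + z⁻¹) / 2)) =
      ∮ z in C(0, r), z ^ (-n - 1) * g ((z + z⁻¹) / 2) := by
    have hdiff : ∀ z : ℂ, z ≠ 0 →
        DifferentiableAt ℂ (fun z : ℂ => z ^ (-n - 1) * g ((z + z⁻¹) / 2)) z := by
      intro z hz
      refine DifferentiableAt.mul (differentiableAt_zpow.2 (Or.inl hz)) ?_
      exact (hg _).comp z ((differentiableAt_id.add (differentiableAt_inv hz)).div_const 2)
    have h2 : ∀ a b : ℝ, 0 < a → a ≤ b →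
        (∮ z in C(0, b), z ^ (-n - 1) * g ((z + z⁻¹) / 2)) =
        ∮ z in C(0, a), z ^ (-n - 1) * g ((z + z⁻¹) / 2) := by
      intro a b ha hab
      refine Complex.circleIntegral_eq_of_differentiable_on_annulus_off_countable ha hab
        (s := ∅) Set.countable_empty ?_ ?_
      · intro z hz
        refine (hdiff z ?_).continuousAt.continuousWithinAt
        rintro rfl
        exact hz.2 (by simpa using ha)
      · intro z hz
        refine hdiff z ?_
        rintro rfl
        exact hz.1.2 (by simpa using ha.le)
    rcases le_total 1 r with h | h
    · exact (h2 1 r one_pos h).symm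
    · exact h2 r 1 hr h
  rw [key]
  have := circleIntegral.norm_integral_le_of_norm_le_const (c := 0) (R := r)
    (f := fun z : ℂ => z ^ (-n - 1) * g ((z + z⁻¹) / 2)) (C := r ^ (-n - 1) * M) hr.le (by
      intro z hz
      have hz' : ‖z‖ = r := by simpa using hz
      rw [norm_mul, norm_zpow, hz']
      exact mul_le_mul_of_nonneg_left (hM z hz') (by positivity))
  refine this.trans (le_of_eq ?_)
  rw [zpow_sub_one₀ hr.ne']
  field_simp

lemma cheb_approx (g : ℂ → ℂ) (hg : Differentiable ℂ g) (r M : ℝ) (hr : 1 < r)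
    (hM : ∀ w : ℂ, ‖w‖ = r ∨ ‖w‖ = r⁻¹ → ‖g ((w + w⁻¹) / 2)‖ ≤ M) (N : ℕ) :
    ∃ p : Polynomial ℝ, p.natDegree ≤ N ∧
      ∀ x ∈ Set.Icc (-1 : ℝ) 1, |p.eval x - (g x).re| ≤ 2 * M * r⁻¹ ^ N / (1 - r⁻¹) := by
  have hr0 : 0 < r := by linarith
  have hρ0 : 0 < r⁻¹ := inv_pos.2 hr0
  have hρ1 : r⁻¹ < 1 := inv_lt_one_of_one_lt₀ hr
  have : Fact (0 < 2 * Real.pi) := ⟨by positivity⟩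
  let G : C(AddCircle (2 * Real.pi), ℂ) :=
    ⟨fun t => g (((AddCircle.toCircle t : ℂ) + (AddCircle.toCircle t : ℂ)⁻¹) / 2), by
      refine hg.continuous.comp (Continuous.div_const ?_ _)
      have h1 : Continuous fun t : AddCircle (2 * Real.pi) => (AddCircle.toCircle t : ℂ) :=
        continuous_subtype_val.comp AddCircle.continuous_toCircle
      exact h1.add (h1.inv₀ (fun t => Circle.coe_ne_zero _))⟩
  have hT : ∀ x : ℝ, ((AddCircle.toCircle (x : AddCircle (2 * Real.pi)) : Circle) : ℂ) =
      Complex.exp (x * Complex.I) := by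
    intro x
    rw [AddCircle.toCircle_apply_mk, div_self (by positivity), one_mul, Circle.coe_exp]
  have hG : ∀ x : ℝ, G (x : AddCircle (2 * Real.pi)) = g (Real.cos x : ℝ) := by
    intro x
    change g _ = _
    rw [hT, ← Complex.exp_neg, Complex.ofReal_cos, Complex.cos]
    simp
  have hF : ∀ (n : ℤ) (x : ℝ), fourier n (x : AddCircle (2 * Real.pi)) =
      Complex.exp (n * x * Complex.I) := by
    intro n x
    rw [fourier_coe_apply]
    congr 1
    have : (Real.pi : ℂ) ≠ 0 := by exact_mod_cast Real.pi_ne_zero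
    push_cast
    field_simp
  have hcoef : ∀ n : ℤ, ‖fourierCoeff G n‖ =
      (1 / (2 * Real.pi)) * ‖∮ z in C(0, 1), z ^ (-n - 1) * g ((z + z⁻¹) / 2)‖ := by
    intro n
    have : (∮ z in C(0, 1), z ^ (-n - 1) * g ((z + z⁻¹) / 2)) =
        Complex.I * ∫ x in (0:ℝ)..(0 + 2 * Real.pi),
          fourier (-n) (x : AddCircle (2 * Real.pi)) • G (x : AddCircle (2 * Real.pi)) := by
      rw [circleIntegral, ← intervalIntegral.integral_const_mul, zero_add]
      refine intervalIntegral.integral_congr fun x _ => ?_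
      have hc : circleMap 0 1 x = Complex.exp (x * Complex.I) := by simp [circleMap]
      have hne : Complex.exp (x * Complex.I) ≠ 0 := Complex.exp_ne_zero _
      have hGx : G (x : AddCircle (2 * Real.pi)) =
        g ((Complex.exp (x * Complex.I) + (Complex.exp (x * Complex.I))⁻¹) / 2) := by
        change g _ = _
        rw [hT]
      simp only [deriv_circleMap, hc, smul_eq_mul, hF, hGx]
      rw [zpow_sub_one₀ hne, ← Complex.exp_int_mul]
      have e : Complex.exp (((-n : ℤ) : ℂ) * (x * Complex.I)) =
        Complex.exp (((-n : ℤ) : ℂ) * x * Complex.I) := by ring_nf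
      rw [e]
      field_simp
    rw [this, fourierCoeff_eq_intervalIntegral _ n 0, norm_smul, norm_mul, Complex.norm_I, one_mul,
      Real.norm_of_nonneg (by positivity)]
  have hb : ∀ n : ℕ, ‖fourierCoeff G n‖ ≤ M * r⁻¹ ^ n ∧ ‖fourierCoeff G (-(n : ℤ))‖ ≤ M * r⁻¹ ^ n := by
    intro n
    constructor
    · rw [hcoef]
      have := four_coeff_bound g hg r M hr0 (fun w hw => hM w (Or.inl hw)) n
      rw [zpow_neg, zpow_natCast, ← inv_pow] at this
      rw [one_div_mul_eq_div, div_le_iff₀ (by positivity)]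
      linarith
    · rw [hcoef]
      have := four_coeff_bound g hg r⁻¹ M hρ0 (fun w hw => hM w (Or.inr hw)) (-n)
      rw [neg_neg, zpow_natCast] at this
      rw [neg_neg]
      rw [one_div_mul_eq_div, div_le_iff₀ (by positivity)]
      linarith
  have hgeo : Summable fun n : ℕ => M * r⁻¹ ^ n :=
    (summable_geometric_of_lt_one hρ0.le hρ1).mul_left M
  have hsum : Summable (fourierCoeff G) := by
    refine Summable.of_nat_of_neg ?_ ?_
    · exact Summable.of_norm_bounded hgeo fun n => (hb n).1
    · exact Summable.of_norm_bounded hgeo fun n => (hb n).2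
  let a : ℤ → ℝ := fun n => (fourierCoeff G n).re
  let P : Polynomial ℝ := (∑ n ∈ Finset.range N,
    Polynomial.C (a n + a (-(n : ℤ))) * Polynomial.Chebyshev.T ℝ n) - Polynomial.C (a 0)
  refine ⟨P, ?_, ?_⟩
  · rw [Polynomial.natDegree_sub_C]
    refine Polynomial.natDegree_sum_le_of_forall_le _ _ fun n hn => ?_
    refine (Polynomial.natDegree_C_mul_le _ _).trans ?_
    rw [Polynomial.Chebyshev.natDegree_T]
    have := Finset.mem_range.1 hn
    simp; omega
  · intro x hx
    obtain ⟨θ, rfl⟩ : ∃ θ, Real.cos θ = x := ⟨Real.arccos x, Real.cos_arccos hx.1 hx.2⟩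
    have h1 := has_pointwise_sum_fourier_series_of_summable hsum (θ : AddCircle (2 * Real.pi))
    have h2 := has_pointwise_sum_fourier_series_of_summable hsum ((-θ : ℝ) : AddCircle (2 * Real.pi))
    rw [hG] at h1 h2
    rw [Real.cos_neg] at h2
    have h3 := (h1.add h2).mul_left (1 / 2 : ℂ)
    have h4 : HasSum (fun n : ℤ => a n * Real.cos (n * θ)) (g (Real.cos θ : ℝ)).re := by
      have h5 := Complex.hasSum_re h3
      convert! h5 using 1
      · funext n
        simp only [hF, smul_eq_mul]
        have : (1 / 2 : ℂ) * (fourierCoeff G n * Complex.exp (n * θ * Complex.I) +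
            fourierCoeff G n * Complex.exp (n * ((-θ : ℝ) : ℂ) * Complex.I)) =
            fourierCoeff G n * (Real.cos (n * θ) : ℝ) := by
          rw [Complex.ofReal_cos, Complex.cos]
          push_cast
          ring_nf
        rw [this, Complex.re_mul_ofReal]
      · congr 1
        ring
    have h6 := h4.nat_add_neg
    have h7 := norm_sub_le_of_geometric_bound_of_hasSum (r := r⁻¹) (C := 2 * M) hρ1 (fun n => by
      have e : a (n : ℤ) * Real.cos ((n : ℤ) * θ) + a (-(n : ℤ)) * Real.cos ((-(n : ℤ) : ℤ) * θ)
        = (a (n : ℤ) + a (-(n : ℤ))) * Real.cos (n * θ) := by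
        push_cast
        rw [neg_mul, Real.cos_neg]; ring
      rw [e, norm_mul]
      have h8 : ‖Real.cos (n * θ)‖ ≤ 1 := Real.abs_cos_le_one _
      have h9 : ‖a n + a (-(n : ℤ))‖ ≤ 2 * M * r⁻¹ ^ n := by
        refine (norm_add_le _ _).trans ?_
        have i1 := (Complex.abs_re_le_norm _).trans (hb n).1
        have i2 := (Complex.abs_re_le_norm _).trans (hb n).2
        simp only [Real.norm_eq_abs, a]
        linarith
      calc _ ≤ ‖a n + a (-(n : ℤ))‖ * 1 := mul_le_mul_of_nonneg_left h8 (norm_nonneg _)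
        _ ≤ _ := by linarith) h6 N
    refine le_trans (le_of_eq ?_) h7
    rw [Real.norm_eq_abs]
    congr 1
    simp only [P, Polynomial.eval_sub, Polynomial.eval_finsetSum, Polynomial.eval_mul,
      Polynomial.eval_C, Polynomial.Chebyshev.T_real_cos]
    have : ∀ n : ℕ, a (n : ℤ) * Real.cos ((n : ℤ) * θ) + a (-(n : ℤ)) * Real.cos ((-(n : ℤ) : ℤ) * θ)
        = (a (n : ℤ) + a (-(n : ℤ))) * Real.cos ((n : ℤ) * θ) := by
      intro n
      push_cast
      rw [neg_mul, Real.cos_neg]; ring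
    simp only [this]
    simp
    ring

lemma quad_ineq (A B c η : ℝ) (hA : A ^ 2 = 1 + B ^ 2) (hη : η ^ 2 ≤ 1) :
    (1 - c ^ 2) * B ^ 2 - (c * A - η) ^ 2 ≤ B ^ 2 * (1 - η ^ 2 + 2 * B ^ 2) := by
  have hD : 0 < 1 + 2 * B ^ 2 := by positivity
  have h : 0 ≤ (1 + 2 * B ^ 2) * (B ^ 2 * (1 - η ^ 2 + 2 * B ^ 2) -
      ((1 - c ^ 2) * B ^ 2 - (c * A - η) ^ 2)) := by
    have e : (1 + 2 * B ^ 2) * (B ^ 2 * (1 - η ^ 2 + 2 * B ^ 2) -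
      ((1 - c ^ 2) * B ^ 2 - (c * A - η) ^ 2)) =
      ((1 + 2 * B ^ 2) * c - A * η) ^ 2 + 2 * B ^ 4 * (1 - η ^ 2) + 4 * B ^ 6 := by
      linear_combination ((1 + 2 * B ^ 2) * c ^ 2 - η ^ 2) * hA
    rw [e]
    have : 0 ≤ 1 - η ^ 2 := by linarith
    positivity
  have := nonneg_of_mul_nonneg_right h hD
  linarith

lemma gauss_bound_aux (k η b : ℝ) (hb : 0 < b) (hbη : b ^ 2 ≤ 1 - |η|) (w : ℂ)
    (hw : ‖w‖ = 1 + b) :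
    ‖Complex.exp (-(k : ℂ) ^ 2 * ((w + w⁻¹) / 2 - η) ^ 2)‖ ≤
      Real.exp (4 * k ^ 2 * b ^ 2 * (1 - |η|)) := by
  rw [Complex.norm_exp, Real.exp_le_exp]
  set r : ℝ := 1 + b with hr
  have hr0 : 0 < r := by positivity
  have hns : w.re * w.re + w.im * w.im = r ^ 2 := by
    rw [← hw, ← Complex.normSq_apply, Complex.normSq_eq_norm_sq]
  have hns' : Complex.normSq w = r ^ 2 := by rw [Complex.normSq_apply, hns]
  have hre : ((w + w⁻¹) / 2 - η : ℂ).re = (w.re / r) * ((r + r⁻¹) / 2) - η := by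
    simp [Complex.inv_re, hns']
    field_simp
  have him : ((w + w⁻¹) / 2 - η : ℂ).im = (w.im / r) * ((r - r⁻¹) / 2) := by
    simp [Complex.inv_im, hns']
    field_simp
    ring
  have e : (-(k : ℂ) ^ 2 * ((w + w⁻¹) / 2 - η) ^ 2).re = k ^ 2 *
     (((w + w⁻¹) / 2 - η : ℂ).im ^ 2 - ((w + w⁻¹) / 2 - η : ℂ).re ^ 2) := by
    generalize ((w + w⁻¹) / 2 - η : ℂ) = z
    rw [← Complex.ofReal_pow, ← Complex.ofReal_neg, Complex.re_ofReal_mul, pow_two z, Complex.mul_re]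
    ring
  rw [e, hre, him]
  have hη0 := abs_nonneg η
  have hη1 : |η| ≤ 1 := by nlinarith
  have hs : (w.im / r) ^ 2 = 1 - (w.re / r) ^ 2 := by
    field_simp
    linarith
  have hq := quad_ineq ((r + r⁻¹) / 2) ((r - r⁻¹) / 2) (w.re / r) η (by field_simp; ring)
    (by rw [← sq_abs]; nlinarith)
  have hB0 : 0 ≤ (r - r⁻¹) / 2 := by
    have : r⁻¹ ≤ 1 := inv_le_one_of_one_le₀ (by linarith)
    linarith
  have hB : (r - r⁻¹) / 2 ≤ b := by
    have : 1 - b ≤ r⁻¹ := by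
      rw [← one_div, le_div_iff₀ hr0]; nlinarith
    linarith
  have hB2 : ((r - r⁻¹) / 2) ^ 2 ≤ b ^ 2 := pow_le_pow_left₀ hB0 hB 2
  have h1 : 1 - η ^ 2 ≤ 2 * (1 - |η|) := by rw [← sq_abs]; nlinarith
  have h2 : ((r - r⁻¹) / 2) ^ 2 * (1 - η ^ 2 + 2 * ((r - r⁻¹) / 2) ^ 2) ≤ b ^ 2 * (4 * (1 - |η|)) := by
    refine mul_le_mul hB2 (by linarith) ?_ (by positivity)
    have : η ^ 2 ≤ 1 := by rw [← sq_abs]; nlinarith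
    have := sq_nonneg ((r - r⁻¹) / 2)
    linarith
  rw [mul_pow, hs]
  calc _ ≤ k ^ 2 * (b ^ 2 * (4 * (1 - |η|))) := mul_le_mul_of_nonneg_left (hq.trans h2) (sq_nonneg k)
    _ = _ := by ring

lemma gauss_bound (k η b : ℝ) (hb : 0 < b) (hbη : b ^ 2 ≤ 1 - |η|) (w : ℂ)
    (hw : ‖w‖ = 1 + b ∨ ‖w‖ = (1 + b)⁻¹) :
    ‖Complex.exp (-(k : ℂ) ^ 2 * ((w + w⁻¹) / 2 - η) ^ 2)‖ ≤
      Real.exp (4 * k ^ 2 * b ^ 2 * (1 - |η|)) := by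
  rcases hw with hw | hw
  · exact gauss_bound_aux k η b hb hbη w hw
  · have := gauss_bound_aux k η b hb hbη w⁻¹ (by rw [norm_inv, hw, inv_inv])
    rwa [inv_inv, add_comm w⁻¹ w] at this

lemma poly_antideriv (q : Polynomial ℝ) :
    ∃ P : Polynomial ℝ, P.derivative = q ∧ P.natDegree ≤ q.natDegree + 1 := by
  refine ⟨∑ i ∈ Finset.range (q.natDegree + 1),
    Polynomial.C (q.coeff i / (i + 1)) * Polynomial.X ^ (i + 1), ?_, ?_⟩
  · rw [Polynomial.derivative_sum]
    conv_rhs => rw [q.as_sum_range_C_mul_X_pow]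
    refine Finset.sum_congr rfl fun i _ => ?_
    rw [Polynomial.derivative_C_mul_X_pow]
    have : (i : ℝ) + 1 ≠ 0 := by positivity
    congr 2
    push_cast
    field_simp
  · refine Polynomial.natDegree_sum_le_of_forall_le _ _ fun i hi => ?_
    refine (Polynomial.natDegree_C_mul_X_pow_le _ _).trans ?_
    have := Finset.mem_range.1 hi
    omega

lemma abs_erf_le_one (x : ℝ) : |erf x| ≤ 1 := by
  have hpos : ∀ y : ℝ, 0 ≤ y → |erf y| ≤ 1 := by
    intro y hy
    have hI : MeasureTheory.IntegrableOn (fun t : ℝ => Real.exp (-t ^ 2)) (Set.Ioi 0) := by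
      have := (integrable_exp_neg_mul_sq (b := 1) one_pos).integrableOn (s := Set.Ioi 0)
      simpa using this
    have h0 : 0 ≤ ∫ t in (0:ℝ)..y, Real.exp (-t ^ 2) :=
      intervalIntegral.integral_nonneg hy fun t _ => (Real.exp_pos _).le
    have h1 : ∫ t in (0:ℝ)..y, Real.exp (-t ^ 2) ≤ Real.sqrt Real.pi / 2 := by
      have h2 := integral_gaussian_Ioi 1
      simp only [neg_mul, one_mul, div_one] at h2
      rw [← h2, intervalIntegral.integral_of_le hy]
      exact MeasureTheory.setIntegral_mono_set hI
        (Filter.Eventually.of_forall fun t => (Real.exp_pos _).le)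
        (Filter.Eventually.of_forall fun t ht => ht.1)
    have hp : 0 < Real.sqrt Real.pi := Real.sqrt_pos.2 Real.pi_pos
    rw [erf, abs_of_nonneg (by positivity), div_mul_eq_mul_div, div_le_one hp]
    linarith
  rcases le_total 0 x with h | h
  · exact hpos x h
  · have e : erf x = - erf (-x) := by
      have := intervalIntegral.integral_comp_neg (a := 0) (b := x) (fun t : ℝ => Real.exp (-t ^ 2))
      simp only [neg_sq, neg_zero] at this
      rw [erf, erf, this, intervalIntegral.integral_symm]
      ring
    rw [e, abs_neg]
    exact hpos _ (by linarith)

lemma erf_shift (k η x : ℝ) : erf (k * (x - η)) =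
    2 * k / Real.sqrt Real.pi * ∫ t in η..x, Real.exp (-k ^ 2 * (t - η) ^ 2) := by
  have h1 := intervalIntegral.integral_comp_sub_right (a := η) (b := x)
    (fun t : ℝ => Real.exp (-k ^ 2 * t ^ 2)) η
  have h2 := intervalIntegral.mul_integral_comp_mul_left (a := 0) (b := x - η)
    (f := fun t : ℝ => Real.exp (-t ^ 2)) (c := k)
  simp only [sub_self] at h1
  simp only [mul_zero, mul_pow] at h2
  rw [h1, erf, ← h2]
  simp only [neg_mul]
  ring

lemma erf_approx (k η b : ℝ) (hk : 0 ≤ k) (hb : 0 < b) (hb1 : b ≤ 1) (hbη : b ^ 2 ≤ 1 - |η|)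
    (N : ℕ) : ∃ P : Polynomial ℝ, P.natDegree ≤ N + 1 ∧ ∀ x ∈ Set.Icc (-1 : ℝ) 1,
      |P.eval x - erf (k * (x - η))| ≤
        16 * k * Real.exp (4 * k ^ 2 * b ^ 2 * (1 - |η|)) / (b * (1 + b) ^ N) := by
  obtain ⟨q, hqd, hq⟩ := cheb_approx (fun z : ℂ => Complex.exp (-(k : ℂ) ^ 2 * (z - η) ^ 2))
    (by fun_prop) (1 + b) (Real.exp (4 * k ^ 2 * b ^ 2 * (1 - |η|))) (by linarith)
    (fun w hw => gauss_bound k η b hb hbη w hw) N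
  set M := Real.exp (4 * k ^ 2 * b ^ 2 * (1 - |η|)) with hM
  have hM0 : 0 < M := Real.exp_pos _
  obtain ⟨Q, hQ, hQd⟩ := poly_antideriv q
  have hsp : 1 ≤ Real.sqrt Real.pi := by
    rw [Real.one_le_sqrt]; linarith [Real.pi_gt_three]
  have hηa : |η| ≤ 1 := by nlinarith
  have hη := abs_le.1 hηa
  refine ⟨Polynomial.C (2 * k / Real.sqrt Real.pi) * (Q - Polynomial.C (Q.eval η)), ?_, ?_⟩
  · refine (Polynomial.natDegree_C_mul_le _ _).trans ?_
    rw [Polynomial.natDegree_sub_C]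
    omega
  · intro x hx
    have hint : ∫ t in η..x, q.eval t = Q.eval x - Q.eval η := by
      refine intervalIntegral.integral_eq_sub_of_hasDerivAt (f := fun t => Q.eval t)
        (fun t _ => ?_)
        (q.continuous.intervalIntegrable _ _)
      rw [← hQ]
      exact Q.hasDerivAt t
    have hcont : Continuous fun t : ℝ => Real.exp (-k ^ 2 * (t - η) ^ 2) := by fun_prop
    rw [erf_shift]
    simp only [Polynomial.eval_mul, Polynomial.eval_sub, Polynomial.eval_C]
    rw [← hint, ← mul_sub, ← intervalIntegral.integral_sub (q.continuous.intervalIntegrable _ _)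
      (hcont.intervalIntegrable _ _), abs_mul]
    have hE : 2 * M * (1 + b)⁻¹ ^ N / (1 - (1 + b)⁻¹) ≤ 4 * M / (b * (1 + b) ^ N) := by
      have e : 2 * M * (1 + b)⁻¹ ^ N / (1 - (1 + b)⁻¹) = 2 * (1 + b) * M / (b * (1 + b) ^ N) := by
        have : 1 - (1 + b)⁻¹ = b / (1 + b) := by field_simp; ring
        rw [this, inv_pow]
        field_simp
      rw [e]
      gcongr
      linarith
    have hbd : ‖∫ t in η..x, (q.eval t - Real.exp (-k ^ 2 * (t - η) ^ 2))‖ ≤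
        4 * M / (b * (1 + b) ^ N) * |x - η| := by
      refine intervalIntegral.norm_integral_le_of_norm_le_const fun t ht => ?_
      have ht' : t ∈ Set.Icc (-1 : ℝ) 1 := by
        have h1 := Set.uIoc_subset_uIcc ht
        exact Set.uIcc_subset_Icc ⟨hη.1, hη.2⟩ hx h1
      have h2 := hq t ht'
      have h3 : (Complex.exp (-(k : ℂ) ^ 2 * ((t : ℂ) - η) ^ 2)).re =
          Real.exp (-k ^ 2 * (t - η) ^ 2) := by
        rw [← Complex.exp_ofReal_re]
        push_cast
        rfl
      rw [h3] at h2
      exact h2.trans hE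
    have hx2 : |x - η| ≤ 2 := abs_le.2 ⟨by linarith [hx.1], by linarith [hx.2]⟩
    have hk2 : |2 * k / Real.sqrt Real.pi| ≤ 2 * k := by
      rw [abs_of_nonneg (by positivity)]
      exact div_le_self (by positivity) hsp
    have h5 : 4 * M / (b * (1 + b) ^ N) * |x - η| ≤ 4 * M / (b * (1 + b) ^ N) * 2 :=
      mul_le_mul_of_nonneg_left hx2 (by positivity)
    calc _ ≤ (2 * k) * (4 * M / (b * (1 + b) ^ N) * 2) :=
          mul_le_mul hk2 (hbd.trans h5) (abs_nonneg _) (by positivity)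
      _ = _ := by ring

set_option maxHeartbeats 1000000 in
/-- The paper's Lemma 1: there is an absolute constant `C > 0` such that for all
`ε ∈ (0, 1/100]`, `δ ∈ (0,1)`, and `η` with `|η| ≤ 1 - δ`, setting
`k = (√2/δ)·√(log(1/(2πε²)))`, the shifted error function `erf(k(x - η))` admits a
polynomial approximation `p` on `[-1,1]`, bounded by `1` there, accurate to `ε`, of
degree at most `C·(√(1-|η|)/δ)·(1 + log(√(1-|η|)/δ))·(1 + log(1/ε))^{3/2}`. -/
theorem shifted_erf_poly_approx :
    ∃ C : ℝ, 0 < C ∧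
      ∀ ε δ η : ℝ, ε ∈ Set.Ioc (0 : ℝ) (1 / 100) → δ ∈ Set.Ioo (0 : ℝ) 1 →
        |η| ≤ 1 - δ →
        ∃ p : Polynomial ℝ,
          (p.natDegree : ℝ) ≤
            C * (Real.sqrt (1 - |η|) / δ) * (1 + Real.log (Real.sqrt (1 - |η|) / δ)) *
              (1 + Real.log (1 / ε)) ^ ((3 : ℝ) / 2) ∧
          (∀ x ∈ Set.Icc (-1 : ℝ) 1, |p.eval x| ≤ 1) ∧
          (∀ x ∈ Set.Icc (-1 : ℝ) 1,
            |p.eval x -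
              erf (Real.sqrt 2 / δ * Real.sqrt (Real.log (1 / (2 * Real.pi * ε ^ 2))) *
                (x - η))| ≤ ε) := by
  refine ⟨40, by norm_num, ?_⟩
  rintro ε δ η ⟨hε0, hε1⟩ ⟨hδ0, hδ1⟩ hη
  set S := Real.sqrt (1 - |η|) with hS
  have hη0 : δ ≤ 1 - |η| := by linarith
  have hS2 : S ^ 2 = 1 - |η| := Real.sq_sqrt (by linarith)
  have hS0 : 0 < S := Real.sqrt_pos.2 (by linarith)
  set R := S / δ with hR
  have hR0 : 0 < R := by positivity
  have hRδ : 1 / δ ≤ R ^ 2 := by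
    rw [hR, div_pow, hS2, div_le_div_iff₀ hδ0 (by positivity)]
    nlinarith
  have hR1 : 1 ≤ R := by
    have : 1 ≤ 1 / δ := by rw [le_div_iff₀ hδ0]; linarith
    nlinarith
  have hlogR : 0 ≤ Real.log R := Real.log_nonneg hR1
  set l := Real.log (1 / ε) with hl
  have hel : Real.exp l = 1 / ε := Real.exp_log (by positivity)
  have hinv : 100 ≤ 1 / ε := by rw [le_div_iff₀ hε0]; linarith
  have hl0 : 0 ≤ l := Real.log_nonneg (by linarith)
  set Lg := Real.log (1 / (2 * Real.pi * ε ^ 2)) with hLg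
  have hpi := Real.pi_gt_three
  have hpi4 := Real.pi_le_four
  have hL0 : 0 ≤ Lg := by
    apply Real.log_nonneg
    rw [le_div_iff₀ (by positivity)]
    nlinarith
  have hL2 : Lg ≤ 2 * l := by
    have : 2 * l = Real.log ((1 / ε) ^ 2) := by rw [Real.log_pow]; push_cast; rfl
    rw [this]
    apply Real.log_le_log (by positivity)
    rw [one_div_pow]
    apply one_div_le_one_div_of_le (by positivity)
    nlinarith [sq_nonneg ε]
  set k := Real.sqrt 2 / δ * Real.sqrt Lg with hk
  have hk0 : 0 ≤ k := by positivity
  have hk2 : k ^ 2 = 2 * Lg / δ ^ 2 := by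
    rw [hk, mul_pow, div_pow, Real.sq_sqrt (by norm_num), Real.sq_sqrt hL0]; ring
  have hkle : k ≤ 2 * Real.exp l / δ := by
    refine abs_le_of_sq_le_sq' ?_ (by positivity) |>.2
    rw [hk2, div_pow]
    gcongr
    have := Real.add_one_le_exp l
    nlinarith
  set b := δ / S with hb
  have hb0 : 0 < b := by positivity
  have hbR : b = 1 / R := by rw [hb, hR]; field_simp
  have hb1 : b ≤ 1 := by rw [hbR, div_le_one hR0]; exact hR1
  have hbη : b ^ 2 ≤ 1 - |η| := by
    rw [hb, div_pow, hS2, div_le_iff₀ (by linarith)]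
    nlinarith
  have hMe : 4 * k ^ 2 * b ^ 2 * (1 - |η|) = 8 * Lg := by
    rw [hk2, hb, ← hS2]
    field_simp
    ring
  set X := R * (1 + Real.log R) * (1 + l) with hX
  have hX1 : 1 ≤ X := by
    have : 1 ≤ R * (1 + Real.log R) := by nlinarith
    nlinarith
  set N := ⌈38 * X⌉₊ with hN
  have hNle : 38 * X ≤ N := Nat.le_ceil _
  have hNlt : (N : ℝ) < 38 * X + 1 := Nat.ceil_lt_add_one (by linarith)
  obtain ⟨P, hPd, hP⟩ := erf_approx k η b hk0 hb0 hb1 hbη N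
  have hpow : 64 * R ^ 3 * Real.exp (18 * l) ≤ (1 + b) ^ N := by
    have h1 : Real.exp (19 * l + 3 * Real.log R) ≤ (1 + b) ^ N := by
      have hlog : b / 2 ≤ Real.log (1 + b) := by
        have := Real.one_sub_inv_le_log_of_pos (show 0 < 1 + b by linarith)
        refine le_trans ?_ this
        have e : 1 - (1 + b)⁻¹ = b / (1 + b) := by field_simp; ring
        rw [e]
        gcongr
        linarith
      rw [← Real.exp_log (show 0 < (1 + b) ^ N by positivity), Real.exp_le_exp, Real.log_pow]
      have h2 : 38 * X * (b / 2) ≤ N * Real.log (1 + b) := by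
        gcongr
      refine le_trans ?_ h2
      have h3 : 38 * X * (b / 2) = 19 * ((1 + Real.log R) * (1 + l)) := by
        rw [hX, hbR]; field_simp; ring
      rw [h3]
      nlinarith [mul_nonneg hlogR hl0]
    refine le_trans ?_ h1
    have e1 : Real.exp (19 * l + 3 * Real.log R) = Real.exp l * R ^ 3 * Real.exp (18 * l) := by
      have : 19 * l + 3 * Real.log R = l + ((3 : ℕ) : ℝ) * Real.log R + 18 * l := by
        push_cast; ring
      rw [this, Real.exp_add, Real.exp_add, Real.exp_nat_mul, Real.exp_log hR0]
    rw [e1, hel]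
    gcongr
    linarith
  have hErr : ∀ x ∈ Set.Icc (-1 : ℝ) 1, |P.eval x - erf (k * (x - η))| ≤ ε / 2 := by
    intro x hx
    refine (hP x hx).trans ?_
    rw [hMe]
    have hE8 : Real.exp (8 * Lg) ≤ Real.exp (16 * l) := Real.exp_le_exp.2 (by linarith)
    have hkR : k ≤ 2 * Real.exp l * R ^ 2 := by
      refine hkle.trans ?_
      rw [div_eq_mul_one_div]
      exact mul_le_mul_of_nonneg_left hRδ (by positivity)
    have hnum : 16 * k * Real.exp (8 * Lg) ≤ 16 * (2 * Real.exp l * R ^ 2) * Real.exp (16 * l) := by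
      gcongr
    rw [div_le_iff₀ (by positivity)]
    refine hnum.trans ?_
    have hεl : ε = Real.exp (-l) := by rw [Real.exp_neg, hel]; simp
    calc 16 * (2 * Real.exp l * R ^ 2) * Real.exp (16 * l)
        = ε / 2 * (b * (64 * R ^ 3 * Real.exp (18 * l))) := by
          have e2 : Real.exp (18 * l) = Real.exp l * Real.exp l * Real.exp (16 * l) := by
            rw [← Real.exp_add, ← Real.exp_add]; ring_nf
          rw [e2, hel, hbR]
          field_simp
          ring
      _ ≤ _ := by gcongr
  have hs : 0 < 1 + ε / 2 := by linarith
  refine ⟨Polynomial.C (1 / (1 + ε / 2)) * P, ?_, ?_, ?_⟩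
  · have h1 : ((Polynomial.C (1 / (1 + ε / 2)) * P).natDegree : ℝ) ≤ (N : ℝ) + 1 := by
      exact_mod_cast (Polynomial.natDegree_C_mul_le _ _).trans hPd
    have h2 : 1 + l ≤ (1 + l) ^ ((3 : ℝ) / 2) := by
      have := Real.rpow_le_rpow_of_exponent_le (show 1 ≤ 1 + l by linarith)
        (show (1 : ℝ) ≤ 3 / 2 by norm_num)
      rwa [Real.rpow_one] at this
    calc _ ≤ (N : ℝ) + 1 := h1
      _ ≤ 40 * X := by linarith
      _ = 40 * R * (1 + Real.log R) * (1 + l) := by rw [hX]; ring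
      _ ≤ _ := by gcongr
  · intro x hx
    have h1 := hErr x hx
    have h2 := abs_erf_le_one (k * (x - η))
    rw [Polynomial.eval_mul, Polynomial.eval_C, abs_mul, abs_of_pos (by positivity),
      one_div_mul_eq_div, div_le_one hs]
    rw [abs_le] at h1 h2 ⊢
    constructor <;> linarith
  · intro x hx
    have h1 := hErr x hx
    have h2 := abs_erf_le_one (k * (x - η))
    rw [Polynomial.eval_mul, Polynomial.eval_C]
    generalize erf (k * (x - η)) = f at *
    have e : 1 / (1 + ε / 2) * P.eval x - f = ((P.eval x - f) - ε / 2 * f) / (1 + ε / 2) := by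
      field_simp
      ring
    rw [e, abs_div, abs_of_pos hs, div_le_iff₀ hs]
    rw [abs_le] at h1 h2 ⊢
    constructor <;> nlinarith
end

section
/- There exists an absolute constant C > 0 with the following property. For every ε ∈ (0, 1/100], δ₁ ∈ (0, 1/4], and η ∈ ℝ with −1 + 2δ₁ ≤ η ≤ 1 − 2δ₁, there exists a real polynomial p of degree at most C · (√(1 − |η| + δ₁)/δ₁) · (1 + log(1/δ₁)) · (1 + log(1/ε))^{3/2} such that: |p(x)| ≤ 1 for all x ∈ [−1,1]; p(η) ≤ −1 + 3ε; and |p(x)| ≤ 3ε for every x ∈ [−1,1] with |x − η| ≥ δ₁. -/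
open Polynomial in
/-- For a polynomial `G`, the symmetrised function is a polynomial in `x`. -/
lemma bp_symm_monomial (η : ℝ) (j : ℕ) :
    ∃ t : ℝ[X], t.natDegree ≤ j ∧ ∀ x ∈ Set.Icc (-1 : ℝ) 1, ∀ s : ℝ, s ^ 2 = (1 - η ^ 2) * (1 - x ^ 2) →
      t.eval x = (x * η + s) ^ j + (x * η - s) ^ j := by
  induction j using Nat.strong_induction_on with
  | _ j ih =>
    match j, ih with
    | 0, _ => exact ⟨C 2, by simp, fun x _ s _ => by simp; norm_num⟩
    | 1, _ =>
      refine ⟨C (2 * η) * X, (natDegree_C_mul_le _ _).trans natDegree_X_le, fun x _ s _ => ?_⟩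
      simp; ring
    | j + 2, ih =>
      obtain ⟨t1, d1, h1⟩ := ih (j + 1) (by omega)
      obtain ⟨t0, d0, h0⟩ := ih j (by omega)
      refine ⟨C (2 * η) * X * t1 - (X ^ 2 + C (η ^ 2 - 1)) * t0, ?_, fun x hx s hs => ?_⟩
      · refine (natDegree_sub_le _ _).trans (max_le ?_ ?_)
        · refine natDegree_mul_le.trans ?_
          have := (natDegree_C_mul_le (2 * η) (X : ℝ[X])).trans natDegree_X_le
          omega
        · refine natDegree_mul_le.trans ?_
          have : (X ^ 2 + C (η ^ 2 - 1) : ℝ[X]).natDegree ≤ 2 := by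
            rw [natDegree_X_pow_add_C]
          omega
      · simp only [eval_sub, eval_mul, eval_C, eval_X, eval_add, eval_pow, h1 x hx s hs, h0 x hx s hs]
        have : x ^ 2 + (η ^ 2 - 1) = (x * η) ^ 2 - s ^ 2 := by rw [hs]; ring
        rw [this]; ring

open Polynomial in
lemma bp_symm (η : ℝ) (G : ℝ[X]) :
    ∃ t : ℝ[X], t.natDegree ≤ G.natDegree ∧ ∀ x ∈ Set.Icc (-1 : ℝ) 1, ∀ s : ℝ,
      s ^ 2 = (1 - η ^ 2) * (1 - x ^ 2) →
      t.eval x = G.eval (x * η + s) + G.eval (x * η - s) := by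
  choose t d h using bp_symm_monomial η
  refine ⟨∑ j ∈ Finset.range (G.natDegree + 1), C (G.coeff j) * t j, ?_, fun x hx s hs => ?_⟩
  · refine natDegree_sum_le_of_forall_le _ _ fun j hj => ?_
    refine (natDegree_C_mul_le _ _).trans ((d j).trans ?_)
    have := Finset.mem_range.1 hj
    omega
  · rw [eval_finsetSum, eval_eq_sum_range, eval_eq_sum_range, ← Finset.sum_add_distrib]
    refine Finset.sum_congr rfl fun j _ => ?_
    rw [eval_mul, eval_C, h j x hx s hs]; ring

open Polynomial in
lemma bp_peak (ε σ : ℝ) (hε : 0 < ε) (hσ : 0 < σ) (hσ1 : σ ≤ 1) (n : ℕ)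
    (hn : Real.log (2 / ε) ≤ n * σ) :
    ∃ G : ℝ[X], G.natDegree ≤ n ∧ G.eval 1 = 1 ∧ (∀ c, -1 ≤ c → c ≤ 1 → |G.eval c| ≤ 1) ∧
      (∀ c, -1 ≤ c → c ≤ 1 - σ ^ 2 → |G.eval c| ≤ ε) := by
  set τ := Real.cosh σ - 1 with hτ
  have hτ0 : 0 ≤ τ := by have := Real.one_le_cosh σ; linarith
  have hτσ : τ ≤ σ ^ 2 := by
    have h1 := Real.cosh_le_exp_half_sq σ
    have h2 := Real.add_one_le_exp (-(σ ^ 2 / 2))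
    have h3 : Real.exp (σ ^ 2 / 2) * Real.exp (-(σ ^ 2 / 2)) = 1 := by
      rw [← Real.exp_add]; simp
    have h4 : σ ^ 2 ≤ 1 := by nlinarith
    have h5 := Real.exp_pos (σ ^ 2 / 2)
    have h6 : Real.exp (σ ^ 2 / 2) * (1 - σ ^ 2 / 2) ≤ 1 := by nlinarith
    have h7 : Real.exp (σ ^ 2 / 2) ≤ 1 + σ ^ 2 := by
      have : Real.exp (σ ^ 2 / 2) * (1 - σ ^ 2 / 2) ≤ (1 + σ ^ 2) * (1 - σ ^ 2 / 2) := by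
        nlinarith [sq_nonneg σ]
      exact le_of_mul_le_mul_right this (by linarith)
    linarith
  set M := (Chebyshev.T ℝ n).eval (1 + τ) with hM
  have hMc : M = Real.cosh (n * σ) := by
    rw [hM, hτ, show 1 + (Real.cosh σ - 1) = Real.cosh σ by ring, Chebyshev.T_real_cosh]; simp
  have hM1 : 1 ≤ M := hMc ▸ Real.one_le_cosh _
  have hMε : 1 / ε ≤ M := by
    rw [hMc, Real.cosh_eq]
    have h1 : 2 / ε ≤ Real.exp (n * σ) := by
      rw [← Real.log_le_iff_le_exp (by positivity)]; exact hn
    have h2 := Real.exp_pos (-(n * σ))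
    have : 2 / ε = 2 * (1 / ε) := by ring
    linarith
  have hM0 : 0 < M := by linarith
  have hev : ∀ c, (C (1 / M) * (Chebyshev.T ℝ n).comp (X + C τ)).eval c
      = (Chebyshev.T ℝ n).eval (c + τ) / M := by
    intro c; simp; ring
  have hb : ∀ c, -1 ≤ c → c + τ ≤ 1 → |(Chebyshev.T ℝ n).eval (c + τ)| ≤ 1 := fun c h1 h2 =>
    Chebyshev.abs_eval_T_real_le_one _ (abs_le.2 ⟨by linarith, h2⟩)
  refine ⟨C (1 / M) * (Chebyshev.T ℝ n).comp (X + C τ), ?_, ?_, ?_, ?_⟩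
  · refine (natDegree_C_mul_le _ _).trans ?_
    rw [natDegree_comp, natDegree_X_add_C, Chebyshev.natDegree_T]; simp
  · rw [hev, ← hM, div_self hM0.ne']
  · intro c h1 h2
    rw [hev, abs_div, abs_of_pos hM0, div_le_one hM0]
    rcases le_total (c + τ) 1 with h | h
    · exact (hb c h1 h).trans hM1
    · have e := Real.cosh_arcosh h
      rw [abs_of_nonneg (by linarith [Chebyshev.one_le_eval_T_real n h]), hMc, ← e,
        Chebyshev.T_real_cosh, Real.cosh_le_cosh, abs_mul, abs_mul]
      have : |Real.arcosh (c + τ)| ≤ |σ| := by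
        rw [← Real.cosh_le_cosh, e]; linarith
      simpa using mul_le_mul_of_nonneg_left this (abs_nonneg (n : ℝ))
  · intro c h1 h2
    rw [hev, abs_div, abs_of_pos hM0, div_le_iff₀ hM0]
    refine (hb c h1 (by linarith)).trans ?_
    rw [div_le_iff₀ hε] at hMε; linarith

/-- Algebraic geometry of `cos (θ ∓ θ₀)`. -/
lemma bp_geom (δ η x s : ℝ) (hδ : 0 < δ) (hη : δ * 2 ≤ 1 - |η|)
    (hx : x ∈ Set.Icc (-1 : ℝ) 1) (hs0 : 0 ≤ s) (hs : s ^ 2 = (1 - η ^ 2) * (1 - x ^ 2)) :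
    -1 ≤ x * η - s ∧ x * η + s ≤ 1 ∧ x * η - s ≤ 1 - δ ^ 2 / (5 * (1 - |η| + δ)) ∧
    (δ ≤ |x - η| → x * η + s ≤ 1 - δ ^ 2 / (5 * (1 - |η| + δ))) := by
  obtain ⟨hx1, hx2⟩ := hx
  have hη0 := abs_nonneg η
  have hxa : |x| ≤ 1 := abs_le.2 ⟨hx1, hx2⟩
  have hxη : |x * η| ≤ |η| := by
    rw [abs_mul]; nlinarith [abs_nonneg x]
  obtain ⟨ha, hb⟩ := abs_le.1 hxη
  have hsq : (1 - x * η) ^ 2 - s ^ 2 = (x - η) ^ 2 := by rw [hs]; ring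
  have hsq' : (1 + x * η) ^ 2 - s ^ 2 = (x + η) ^ 2 := by rw [hs]; ring
  have h1 : s ≤ 1 - x * η := by
    apply le_of_sq_le_sq _ (by linarith)
    nlinarith [sq_nonneg (x - η)]
  have h2 : s ≤ 1 + x * η := by
    apply le_of_sq_le_sq _ (by linarith)
    nlinarith [sq_nonneg (x + η)]
  have hD : 0 < 5 * (1 - |η| + δ) := by linarith
  have hq : δ ^ 2 / (5 * (1 - |η| + δ)) ≤ δ := by
    rw [div_le_iff₀ hD]; nlinarith
  refine ⟨by linarith, by linarith, by linarith, fun hd => ?_⟩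
  suffices h : δ ^ 2 / (5 * (1 - |η| + δ)) ≤ 1 - x * η - s by linarith
  rw [div_le_iff₀ hD]
  set d := |x - η| with hdd
  have hd2 : (x - η) ^ 2 = d ^ 2 := (sq_abs _).symm
  set h := 1 - |η| with hh
  have h3 : 1 - x * η ≤ 2 * h + d := by
    have e1 : 1 - x * η = 1 - |η| ^ 2 - (x - η) * η := by rw [sq_abs]; ring
    have e2 : -((x - η) * η) ≤ d := by
      have : |(x - η) * η| ≤ d := by
        rw [abs_mul]; nlinarith [abs_nonneg (x - η)]
      exact (neg_le_abs _).trans this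
    have e3 : 1 - |η| ^ 2 ≤ 2 * h := by
      have := sq_nonneg (1 - |η|)
      rw [hh]; linarith
    linarith
  have h4 : (1 - x * η - s) * (1 - x * η + s) = d ^ 2 := by rw [← hd2, ← hsq]; ring
  have h5 : 1 - x * η + s ≤ 4 * h + 2 * d := by linarith
  have h6 : d ^ 2 ≤ (1 - x * η - s) * (4 * h + 2 * d) := by
    rw [← h4]; exact mul_le_mul_of_nonneg_left h5 (by linarith)
  have h7 : δ ^ 2 * (4 * h + 2 * d) ≤ d ^ 2 * (5 * (h + δ)) := by
    have a1 : δ ^ 2 ≤ d ^ 2 := pow_le_pow_left₀ hδ.le hd 2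
    have a2 : δ ^ 2 * d ≤ d ^ 2 * δ := by
      have := mul_nonneg (mul_pos hδ (hδ.trans_le hd)).le (sub_nonneg.2 hd)
      linarith
    have : 0 ≤ h := by linarith
    linarith [mul_le_mul_of_nonneg_right a1 this, mul_nonneg (sq_nonneg d) this, mul_nonneg (sq_nonneg d) hδ.le]
  have hpos : 0 < 4 * h + 2 * d := by linarith
  refine le_of_mul_le_mul_right (h7.trans ?_) hpos
  calc d ^ 2 * (5 * (h + δ)) ≤ ((1 - x * η - s) * (4 * h + 2 * d)) * (5 * (h + δ)) :=
        mul_le_mul_of_nonneg_right h6 hD.le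
    _ = _ := by ring



set_option maxHeartbeats 2000000 in
/-- The polynomial band-pass filter from the paper's Corollary 1: there is an absolute
constant `C > 0` such that for all `ε ∈ (0,1/100]`, `δ₁ ∈ (0,1/4]`, and
`η ∈ [-1 + 2δ₁, 1 - 2δ₁]`, there is a real polynomial `p` of degree at most
`C·(√(1 - |η| + δ₁)/δ₁)·(1 + log(1/δ₁))·(1 + log(1/ε))^{3/2}` with `|p| ≤ 1` on `[-1,1]`,
`p(η) ≤ -1 + 3ε`, and `|p(x)| ≤ 3ε` on `[-1,1]` whenever `|x - η| ≥ δ₁`. -/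
theorem bandpass_poly_approx :
    ∃ C : ℝ, 0 < C ∧
      ∀ ε δ₁ η : ℝ, ε ∈ Set.Ioc (0 : ℝ) (1 / 100) → δ₁ ∈ Set.Ioc (0 : ℝ) (1 / 4) →
        -1 + 2 * δ₁ ≤ η → η ≤ 1 - 2 * δ₁ →
        ∃ p : Polynomial ℝ,
          (p.natDegree : ℝ) ≤
            C * (Real.sqrt (1 - |η| + δ₁) / δ₁) * (1 + Real.log (1 / δ₁)) *
              (1 + Real.log (1 / ε)) ^ ((3 : ℝ) / 2) ∧
          (∀ x ∈ Set.Icc (-1 : ℝ) 1, |p.eval x| ≤ 1) ∧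
          p.eval η ≤ -1 + 3 * ε ∧
          (∀ x ∈ Set.Icc (-1 : ℝ) 1, δ₁ ≤ |x - η| → |p.eval x| ≤ 3 * ε) := by
  refine ⟨4, by norm_num, fun ε δ η hε hδ hη1 hη2 => ?_⟩
  obtain ⟨hε0, hε1⟩ := hε
  obtain ⟨hδ0, hδ1⟩ := hδ
  have hη : δ * 2 ≤ 1 - |η| := by
    have : |η| ≤ 1 - 2 * δ := abs_le.2 ⟨by linarith, hη2⟩
    linarith
  have hηa := abs_nonneg η
  set D := 1 - |η| + δ with hD
  have hD0 : 0 < D := by linarith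
  set R := Real.sqrt D with hR
  have hR0 : 0 < R := Real.sqrt_pos.2 hD0
  have hR2 : R ^ 2 = D := Real.sq_sqrt hD0.le
  have h50 : 0 < Real.sqrt 5 := Real.sqrt_pos.2 (by norm_num)
  have h52 : Real.sqrt 5 ^ 2 = 5 := Real.sq_sqrt (by norm_num)
  have h53 : Real.sqrt 5 ≤ 3 := by nlinarith
  set σ := δ / (Real.sqrt 5 * R) with hσ
  have hσ0 : 0 < σ := by positivity
  have hσ2 : σ ^ 2 = δ ^ 2 / (5 * D) := by rw [hσ, div_pow, mul_pow, hR2, h52]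
  have hσ1 : σ ≤ 1 := by
    have : σ ^ 2 ≤ 1 := by
      rw [hσ2, div_le_one (by positivity)]; nlinarith
    nlinarith
  have hL : 0 ≤ Real.log (1 / ε) := Real.log_nonneg (by rw [le_div_iff₀ hε0]; linarith)
  have hLδ : 0 ≤ Real.log (1 / δ) := Real.log_nonneg (by rw [le_div_iff₀ hδ0]; linarith)
  have hlog : Real.log (2 / ε) = Real.log 2 + Real.log (1 / ε) := by
    rw [← Real.log_mul (by norm_num) (by positivity)]; congr 1; ring
  have hl2 : 0 < Real.log 2 := Real.log_pos (by norm_num)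
  have hl2' : Real.log 2 < 1 := by linarith [Real.log_two_lt_d9]
  obtain ⟨G, hGd, hG1, hGb, hGs⟩ := bp_peak ε σ hε0 hσ0 hσ1 ⌈Real.log (2 / ε) / σ⌉₊ (by
    rw [← div_le_iff₀ hσ0]; exact Nat.le_ceil _)
  obtain ⟨q, hqd, hq⟩ := bp_symm η G
  have key : ∀ x ∈ Set.Icc (-1 : ℝ) 1, ∃ u v : ℝ, q.eval x = G.eval u + G.eval v ∧
      |G.eval u| ≤ 1 ∧ |G.eval v| ≤ ε ∧ (δ ≤ |x - η| → |G.eval u| ≤ ε) := by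
    intro x hx
    have hn : 0 ≤ (1 - η ^ 2) * (1 - x ^ 2) := by
      have : η ^ 2 ≤ 1 := by nlinarith
      have : x ^ 2 ≤ 1 := by nlinarith [hx.1, hx.2]
      apply mul_nonneg <;> linarith
    obtain ⟨g1, g2, g3, g4⟩ := bp_geom δ η x _ hδ0 hη hx (Real.sqrt_nonneg _) (Real.sq_sqrt hn)
    rw [← hD, ← hσ2] at g3 g4
    have g0 := Real.sqrt_nonneg ((1 - η ^ 2) * (1 - x ^ 2))
    exact ⟨_, _, hq x hx _ (Real.sq_sqrt hn), hGb _ (by linarith) g2, hGs _ g1 g3,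
      fun hd => hGs _ (by linarith) (g4 hd)⟩
  have h1ε : 0 < 1 + ε := by linarith
  have hev : ∀ x, (Polynomial.C (-(1 / (1 + ε))) * q).eval x = -(q.eval x / (1 + ε)) := by
    intro x; rw [Polynomial.eval_mul, Polynomial.eval_C]; ring
  have habs : ∀ x, |(Polynomial.C (-(1 / (1 + ε))) * q).eval x| = |q.eval x| / (1 + ε) := by
    intro x; rw [hev, abs_neg, abs_div, abs_of_pos h1ε]
  refine ⟨Polynomial.C (-(1 / (1 + ε))) * q, ?_, ?_, ?_, ?_⟩
  · have hd : ((Polynomial.C (-(1 / (1 + ε))) * q).natDegree : ℝ) ≤ ⌈Real.log (2 / ε) / σ⌉₊ := by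
      exact_mod_cast (Polynomial.natDegree_C_mul_le _ _).trans (hqd.trans hGd)
    have hc := (Nat.ceil_lt_add_one (a := Real.log (2 / ε) / σ)
      (div_nonneg (by linarith) hσ0.le)).le
    have hA : 1 ≤ R / δ := by
      rw [le_div_iff₀ hδ0]; nlinarith
    have hdiv : Real.log (2 / ε) / σ = Real.sqrt 5 * Real.log (2 / ε) * (R / δ) := by
      rw [hσ]; field_simp
    set A := R / δ
    set L := Real.log (1 / ε)
    have hpow : 1 + L ≤ (1 + L) ^ ((3 : ℝ) / 2) := by
      conv_lhs => rw [← Real.rpow_one (1 + L)]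
      exact Real.rpow_le_rpow_of_exponent_le (by linarith) (by norm_num)
    have h1 : Real.sqrt 5 * Real.log (2 / ε) ≤ 3 * (1 + L) :=
      mul_le_mul h53 (by linarith) (by linarith) (by norm_num)
    calc _ ≤ Real.sqrt 5 * Real.log (2 / ε) * A + 1 := by linarith
      _ ≤ 3 * (1 + L) * A + A * (1 + L) := by
          have := mul_le_mul_of_nonneg_right h1 (by linarith : 0 ≤ A)
          nlinarith
      _ = 4 * A * 1 * (1 + L) := by ring
      _ ≤ 4 * A * (1 + Real.log (1 / δ)) * (1 + L) ^ ((3 : ℝ) / 2) := by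
          gcongr
          linarith
  · intro x hx
    obtain ⟨u, v, e, b1, b2, -⟩ := key x hx
    rw [habs, div_le_one h1ε, e]
    exact (abs_add_le _ _).trans (by linarith)
  · have hs : (1 - η ^ 2) ^ 2 = (1 - η ^ 2) * (1 - η ^ 2) := by ring
    have hx : η ∈ Set.Icc (-1 : ℝ) 1 := ⟨by linarith, by linarith⟩
    have h0 : 0 ≤ 1 - η ^ 2 := by nlinarith [hx.1, hx.2]
    obtain ⟨g1, -, g3, -⟩ := bp_geom δ η η _ hδ0 hη hx h0 hs
    rw [← hD, ← hσ2] at g3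
    have e := hq η hx _ hs
    rw [show η * η + (1 - η ^ 2) = 1 by ring, hG1] at e
    have := (abs_le.1 (hGs _ g1 g3)).1
    rw [hev, neg_le, le_div_iff₀ h1ε, e]
    have h9 : 0 ≤ ε * ε := mul_self_nonneg ε
    linarith
  · intro x hx hd
    obtain ⟨u, v, e, -, b2, b3⟩ := key x hx
    rw [habs, div_le_iff₀ h1ε, e]
    refine (abs_add_le _ _).trans ?_
    have := b3 hd
    have h9 : 0 ≤ ε * ε := mul_self_nonneg ε
    linarith
end
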